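/- arXiv:2402.05555 — 4 statements merged into one kernel-verified Lean document; each statement's English description precedes it below -/
import Mathlib

section
/- Let K be a field, S = K[x_1,…,x_n], 𝔪 = (x_1,…,x_n), let A ⊆ ℕⁿ be a finite nonempty set of exponent vectors, and let I = (x^a : a ∈ A). Suppose there exists an index i ∈ {1,…,n} such that a_i = 0 for every a ∈ A (i.e. the variable x_i divides no generator of I). Then for every integer k ≥ 0, (I𝔪^{k+1} : 𝔪) = I𝔪^{k}; that is, I𝔪^k is weakly 𝔪-full for all k ≥ 0. -/
open MvPolynomial in
theorem aux_pow (K : Type*) [Field K] (n : ℕ) (A : Finset (Fin n →₀ ℕ)) (k : ℕ) :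
    Ideal.span ((fun a : Fin n →₀ ℕ => monomial a (1 : K)) '' A) *
      Ideal.span (Set.range (X : Fin n → MvPolynomial (Fin n) K)) ^ k =
    Ideal.span ((fun a : Fin n →₀ ℕ => monomial a (1 : K)) ''
      {b | ∃ a ∈ A, a ≤ b ∧ a.degree + k ≤ b.degree}) := by
  induction k with
  | zero =>
    rw [pow_zero, mul_one]
    ext f
    rw [mem_ideal_span_monomial_image, mem_ideal_span_monomial_image]
    refine forall₂_congr fun u _ => ⟨?_, ?_⟩
    · rintro ⟨a, ha, h⟩
      exact ⟨a, ⟨a, ha, le_rfl, le_rfl⟩, h⟩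
    · rintro ⟨b, ⟨a, ha, hab, _⟩, h⟩
      exact ⟨a, ha, hab.trans h⟩
  | succ k ih =>
    rw [pow_succ, ← mul_assoc, ih, Ideal.span_mul_span']
    apply le_antisymm
    · rw [Ideal.span_le]
      rintro _ ⟨_, ⟨b, ⟨a, ha, hab, hd⟩, rfl⟩, _, ⟨j, rfl⟩, rfl⟩
      refine Ideal.subset_span ⟨b + Finsupp.single j 1, ⟨a, ha, ?_, ?_⟩, ?_⟩
      · exact hab.trans le_self_add
      · rw [map_add, Finsupp.degree_single]; omega
      · simp [X, monomial_mul]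
    · rw [Ideal.span_le]
      rintro _ ⟨b, ⟨a, ha, hab, hd⟩, rfl⟩
      obtain ⟨j, hj⟩ : ∃ j, a j < b j := by
        by_contra! h
        have : b = a := le_antisymm h hab
        subst this
        omega
      have hb : b = (b - Finsupp.single j 1) + Finsupp.single j 1 := by
        rw [tsub_add_cancel_of_le]
        rw [Finsupp.single_le_iff]; omega
      have hdeg := congrArg Finsupp.degree hb
      rw [map_add, Finsupp.degree_single] at hdeg
      refine Ideal.subset_span ⟨monomial (b - Finsupp.single j 1) 1,
        ⟨_, ⟨a, ha, ?_, by omega⟩, rfl⟩, X j, ⟨j, rfl⟩, ?_⟩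
      · intro l
        have := hab l
        by_cases hl : j = l
        · subst hl; simp; omega
        · simpa [Finsupp.single_apply, hl] using this
      · simp only [X, monomial_mul, mul_one]
        rw [← hb]


/-- If some variable `x_i` divides no generator of the monomial ideal
`I = (x^a : a ∈ A)`, then `(I𝔪^{k+1} : 𝔪) = I𝔪^k` for every `k ≥ 0`. -/
theorem stmt_4 (K : Type*) [Field K] (n : ℕ) (A : Finset (Fin n →₀ ℕ))
    (hAne : A.Nonempty)
    (m I : Ideal (MvPolynomial (Fin n) K))
    (hm : m = Ideal.span (Set.range (MvPolynomial.X : Fin n → MvPolynomial (Fin n) K)))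
    (hI : I = Ideal.span ((fun a : Fin n →₀ ℕ => MvPolynomial.monomial a (1 : K)) '' A))
    (i : Fin n) (hi : ∀ a ∈ A, a i = 0)
    (k : ℕ) :
    (I * m ^ (k + 1)).colon m = I * m ^ k := by
  subst hm hI
  apply le_antisymm
  · intro f hf
    have h := Submodule.mem_colon.1 hf (MvPolynomial.X i) (Ideal.subset_span ⟨i, rfl⟩)
    rw [aux_pow, smul_eq_mul, MvPolynomial.mem_ideal_span_monomial_image] at h
    rw [aux_pow, MvPolynomial.mem_ideal_span_monomial_image]
    intro u hu
    obtain ⟨b, ⟨a, ha, hab, hd⟩, hb⟩ := h (u + Finsupp.single i 1) (by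
      rw [MvPolynomial.mem_support_iff] at hu ⊢
      rwa [MvPolynomial.coeff_mul_X])
    refine ⟨u, ⟨a, ha, ?_, ?_⟩, le_rfl⟩
    · intro l
      have := (hab.trans hb) l
      by_cases hl : i = l
      · subst hl; rw [hi a ha]; exact Nat.zero_le _
      · simpa [Finsupp.single_apply, hl] using this
    · have := Finsupp.degree_mono hb
      rw [map_add, Finsupp.degree_single] at this
      omega
  · intro f hf
    rw [Submodule.mem_colon]
    intro p hp
    rw [pow_succ, ← mul_assoc]
    exact Ideal.mul_mem_mul hf hp
end

section
/- Let K be a field, n ≥ 1, S = K[x_1,…,x_n], 𝔪 = (x_1,…,x_n), and let I = (x_1^{a_1},…,x_n^{a_n}) be the monomial complete intersection generated by the pure powers x_i^{a_i}, where 1 ≤ a_1 ≤ a_2 ≤ … ≤ a_n. Then for every integer k ≥ Σ_{i=1}^{n−1} a_i − (n−1), the ideal I𝔪^k is weakly 𝔪-full, i.e. (I𝔪^{k+1} : 𝔪) = I𝔪^{k}. -/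
open MvPolynomial in
theorem aux_T (K : Type*) [Field K] (n : ℕ) (a : Fin n → ℕ) (k : ℕ) :
    Ideal.span (Set.range fun i : Fin n => (X i : MvPolynomial (Fin n) K) ^ a i) *
      (Ideal.span (Set.range (X : Fin n → MvPolynomial (Fin n) K))) ^ k =
    Ideal.span ((fun u => monomial u (1 : K)) ''
      {u : Fin n →₀ ℕ | ∃ i, a i ≤ u i ∧ a i + k ≤ ∑ j, u j}) := by
  induction k with
  | zero =>
    rw [pow_zero, mul_one]
    apply le_antisymm
    · rw [Ideal.span_le]
      rintro _ ⟨i, rfl⟩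
      apply Ideal.subset_span
      refine ⟨Finsupp.single i (a i), ⟨i, by simp, ?_⟩, ?_⟩
      · simp [Finsupp.single_apply]
      · simp [X_pow_eq_monomial]
    · rw [Ideal.span_le]
      rintro _ ⟨u, ⟨i, hi, -⟩, rfl⟩
      have hle : Finsupp.single i (a i) ≤ u := by simpa using hi
      have : monomial u (1 : K) = monomial (u - Finsupp.single i (a i)) 1 * X i ^ a i := by
        rw [X_pow_eq_monomial, monomial_mul, tsub_add_cancel_of_le hle, one_mul]
      simp only [this]
      exact Ideal.mul_mem_left _ _ (Ideal.subset_span ⟨i, rfl⟩)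
  | succ k ih =>
    rw [pow_succ, ← mul_assoc, ih]
    apply le_antisymm
    · rw [Ideal.span_mul_span', Ideal.span_le]
      rintro _ ⟨_, ⟨u, ⟨i, hi, hd⟩, rfl⟩, _, ⟨j, rfl⟩, rfl⟩
      apply Ideal.subset_span
      refine ⟨u + Finsupp.single j 1, ⟨i, ?_, ?_⟩, ?_⟩
      · simp only [Finsupp.add_apply]; omega
      · simp only [Finsupp.add_apply, Finset.sum_add_distrib]
        have : ∑ x, (Finsupp.single j 1 : Fin n →₀ ℕ) x = 1 := by simp [Finsupp.single_apply]
        omega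
      · simp [X, monomial_mul]
    · rw [Ideal.span_le]
      rintro _ ⟨u, ⟨i, hi, hd⟩, rfl⟩
      have key : ∃ j, 1 ≤ u j ∧ (j = i → a i + 1 ≤ u i) := by
        by_cases h : a i + 1 ≤ u i
        · exact ⟨i, by omega, fun _ => h⟩
        · by_contra hcon
          push Not at hcon
          have h0 : ∀ j, j ≠ i → u j = 0 := by
            intro j hj
            by_contra h1
            exact hj (hcon j (by omega)).1
          rw [Finset.sum_eq_single i (fun j _ hj => h0 j hj) (by simp)] at hd
          omega
      obtain ⟨j, hj, hji⟩ := key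
      have hle : Finsupp.single j 1 ≤ u := by simpa using hj
      obtain ⟨v, rfl⟩ := exists_add_of_le hle
      have : monomial (Finsupp.single j 1 + v) (1 : K) = monomial v 1 * X j := by
        rw [X, monomial_mul, add_comm, one_mul]
      simp only [this]
      refine Ideal.mul_mem_mul (Ideal.subset_span ⟨v, ⟨i, ?_, ?_⟩, rfl⟩)
        (Ideal.subset_span ⟨j, rfl⟩)
      · by_cases hh : j = i
        · subst hh
          have := hji rfl
          simp at this; omega
        · simpa [Finsupp.single_apply, hh] using hi
      · have h1 : ∑ x, (Finsupp.single j 1 : Fin n →₀ ℕ) x = 1 := by simp [Finsupp.single_apply]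
        simp only [Finsupp.add_apply, Finset.sum_add_distrib] at hd
        omega

open MvPolynomial in
theorem aux_mem (K : Type*) [Field K] (n : ℕ) (a : Fin n → ℕ) (k : ℕ)
    (p : MvPolynomial (Fin n) K) :
    p ∈ Ideal.span (Set.range fun i : Fin n => (X i : MvPolynomial (Fin n) K) ^ a i) *
      (Ideal.span (Set.range (X : Fin n → MvPolynomial (Fin n) K))) ^ k ↔
    ∀ u ∈ p.support, ∃ i, a i ≤ u i ∧ a i + k ≤ ∑ j, u j := by
  rw [aux_T, mem_ideal_span_monomial_image]
  refine forall₂_congr fun u _ => ⟨?_, fun h => ⟨u, h, le_rfl⟩⟩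
  rintro ⟨v, ⟨i, hi, hd⟩, hv⟩
  exact ⟨i, hi.trans (hv i), hd.trans (Finset.sum_le_sum fun j _ => hv j)⟩

/-- For a monomial complete intersection `I = (x_1^{a_1},…,x_n^{a_n})` of pure powers
with `1 ≤ a_1 ≤ … ≤ a_n`, for every `k ≥ Σ_{i=1}^{n-1} a_i − (n−1)` the ideal
`I𝔪^k` is weakly `𝔪`-full: `(I𝔪^{k+1} : 𝔪) = I𝔪^k`. -/
theorem stmt_5 (K : Type*) [Field K] (n : ℕ) (hn : 1 ≤ n)
    (a : Fin n → ℕ) (ha1 : ∀ i, 1 ≤ a i) (hmono : Monotone a)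
    (m I : Ideal (MvPolynomial (Fin n) K))
    (hm : m = Ideal.span (Set.range (MvPolynomial.X : Fin n → MvPolynomial (Fin n) K)))
    (hI : I = Ideal.span (Set.range fun i : Fin n => (MvPolynomial.X i : MvPolynomial (Fin n) K) ^ a i))
    (k : ℕ)
    (hk : (∑ i ∈ Finset.univ.filter (fun i : Fin n => (i : ℕ) < n - 1), a i) - (n - 1) ≤ k) :
    (I * m ^ (k + 1)).colon m = I * m ^ k := by
  apply le_antisymm
  · intro p hp
    rw [Submodule.mem_colon] at hp
    rw [hI, hm, aux_mem]
    intro u hu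
    have hX : ∀ j, ∃ i, a i ≤ (u + Finsupp.single j 1 : Fin n →₀ ℕ) i ∧ a i + k ≤ ∑ j, u j := by
      intro j
      have h := hp (MvPolynomial.X j) (by rw [hm]; exact Ideal.subset_span ⟨j, rfl⟩)
      rw [hI, hm, smul_eq_mul, aux_mem] at h
      obtain ⟨i, hi, hd⟩ := h (u + Finsupp.single j 1) (by
        rw [MvPolynomial.mem_support_iff, MvPolynomial.coeff_mul_X]
        exact MvPolynomial.mem_support_iff.1 hu)
      refine ⟨i, hi, ?_⟩
      have h1 : ∑ x, (Finsupp.single j 1 : Fin n →₀ ℕ) x = 1 := by simp [Finsupp.single_apply]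
      simp only [Finsupp.add_apply, Finset.sum_add_distrib] at hd
      omega
    by_contra hcon
    push Not at hcon
    have hall : ∀ j, u j + 1 = a j ∧ a j + k ≤ ∑ j, u j := by
      intro j
      obtain ⟨i, hi, hd⟩ := hX j
      have hlt : u i < a i := by
        by_contra h
        have := hcon i (by omega)
        omega
      by_cases hij : j = i
      · subst hij
        simp at hi
        exact ⟨by omega, hd⟩
      · simp [Finsupp.single_apply, hij] at hi
        omega
    obtain ⟨N, rfl⟩ : ∃ N, n = N + 1 := ⟨n - 1, by omega⟩
    have hlast := hall (Fin.last N)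
    have e1 : (∑ i ∈ Finset.univ.filter (fun i : Fin (N+1) => (i : ℕ) < N + 1 - 1), a i)
        = ∑ i : Fin N, u i.castSucc + N := by
      rw [Finset.sum_filter, Fin.sum_univ_castSucc]
      simp [← (hall _).1, Finset.sum_add_distrib]
    rw [e1] at hk
    rw [Fin.sum_univ_castSucc] at hlast
    omega
  · intro p hp
    rw [Submodule.mem_colon]
    intro q hq
    rw [pow_succ, ← mul_assoc]
    exact Ideal.mul_mem_mul hp hq
end

section
/- Let K be a field, n ≥ 1, S = K[x_1,…,x_n], 𝔪 = (x_1,…,x_n), and let I = (x_1^{a_1},…,x_n^{a_n}) with 1 ≤ a_1 ≤ a_2 ≤ … ≤ a_n. Suppose Σ_{i=1}^{n−1} a_i ≥ n, and set k = Σ_{i=1}^{n−1} a_i − n. Then the monomial v = ∏_{i=1}^{n} x_i^{a_i − 1} satisfies v·𝔪 ⊆ I𝔪^{k+1} and v ∉ I𝔪^{k}; in particular (I𝔪^{k+1} : 𝔪) ≠ I𝔪^{k}, so I𝔪^k is not weakly 𝔪-full. -/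
/-- For `I = (x_1^{a_1},…,x_n^{a_n})` with `1 ≤ a_1 ≤ … ≤ a_n` and
`Σ_{i=1}^{n-1} a_i ≥ n`, setting `k = Σ_{i=1}^{n-1} a_i − n`, the monomial
`v = Π_i x_i^{a_i−1}` satisfies `v𝔪 ⊆ I𝔪^{k+1}` but `v ∉ I𝔪^k`; in particular
`(I𝔪^{k+1} : 𝔪) ≠ I𝔪^k`, so `I𝔪^k` is not weakly `𝔪`-full. -/
theorem stmt_6 (K : Type*) [Field K] (n : ℕ) (hn : 1 ≤ n)
    (a : Fin n → ℕ) (ha1 : ∀ i, 1 ≤ a i) (hmono : Monotone a)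
    (m I : Ideal (MvPolynomial (Fin n) K))
    (hm : m = Ideal.span (Set.range (MvPolynomial.X : Fin n → MvPolynomial (Fin n) K)))
    (hI : I = Ideal.span (Set.range fun i : Fin n => (MvPolynomial.X i : MvPolynomial (Fin n) K) ^ a i))
    (S : ℕ) (hS : S = ∑ i ∈ Finset.univ.filter (fun i : Fin n => (i : ℕ) < n - 1), a i)
    (hSn : n ≤ S) (k : ℕ) (hk : k = S - n)
    (v : MvPolynomial (Fin n) K)
    (hv : v = ∏ i : Fin n, (MvPolynomial.X i : MvPolynomial (Fin n) K) ^ (a i - 1)) :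
    (∀ f ∈ m, v * f ∈ I * m ^ (k + 1)) ∧ v ∉ I * m ^ k ∧
      (I * m ^ (k + 1)).colon m ≠ I * m ^ k := by
  classical
  have hne : ∀ j : Fin n, k + 1 ≤ ∑ i ∈ Finset.univ.erase j, (a i - 1) := by
    intro j
    let j0 : Fin n := ⟨n - 1, by omega⟩
    have hf : Finset.univ.filter (fun i : Fin n => (i : ℕ) < n - 1) = Finset.univ.erase j0 := by
      ext i
      have := i.2
      simp only [Finset.mem_filter, Finset.mem_univ, true_and, Finset.mem_erase, and_true, ne_eq,
        Fin.ext_iff, j0]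
      omega
    rw [hf] at hS
    have h1 := Finset.add_sum_erase Finset.univ a (Finset.mem_univ j)
    have h2 := Finset.add_sum_erase Finset.univ a (Finset.mem_univ j0)
    have h3 : a j ≤ a j0 := hmono (by
      have := j.2
      simp only [Fin.le_def, j0]
      omega)
    have h4 : ∑ i ∈ Finset.univ.erase j, (a i - 1) + (n - 1) = ∑ i ∈ Finset.univ.erase j, a i := by
      have h5 : (Finset.univ.erase j).card = n - 1 := by
        simp [Finset.card_erase_of_mem]
      rw [← h5, Finset.card_eq_sum_ones, ← Finset.sum_add_distrib]
      exact Finset.sum_congr rfl fun i _ => Nat.sub_add_cancel (ha1 i)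
    omega
  have hXm : ∀ i : Fin n, (MvPolynomial.X i : MvPolynomial (Fin n) K) ∈ m := fun i => by
    rw [hm]; exact Ideal.subset_span ⟨i, rfl⟩
  have hA : ∀ f ∈ m, v * f ∈ I * m ^ (k + 1) := by
    have hle : m ≤ (I * m ^ (k + 1)).colon (Ideal.span {v} : Set (MvPolynomial (Fin n) K)) := by
      conv_lhs => rw [hm]
      rw [Ideal.span_le]
      rintro _ ⟨j, rfl⟩
      rw [SetLike.mem_coe, Ideal.mem_colon_span_singleton]
      have hprod : (∏ i ∈ Finset.univ.erase j,
          (MvPolynomial.X i : MvPolynomial (Fin n) K) ^ (a i - 1)) ∈ m ^ (k + 1) := by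
        refine Ideal.pow_le_pow_right (hne j) ?_
        rw [← Finset.prod_pow_eq_pow_sum]
        exact Ideal.prod_mem_prod fun i _ => Ideal.pow_mem_pow (hXm i) _
      have hXI : (MvPolynomial.X j : MvPolynomial (Fin n) K) ^ a j ∈ I := by
        rw [hI]; exact Ideal.subset_span ⟨j, rfl⟩
      have := Ideal.mul_mem_mul hXI hprod
      rw [hv, ← Finset.mul_prod_erase Finset.univ _ (Finset.mem_univ j), ← mul_assoc, ← pow_succ',
        Nat.sub_add_cancel (ha1 j)]
      exact this
    intro f hf
    have := hle hf
    rw [Ideal.mem_colon_span_singleton] at this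
    rwa [mul_comm v f]
  have hvI : v ∉ I := by
    intro h
    have hv' : v = MvPolynomial.monomial (Finsupp.equivFunOnFinite.symm fun i => a i - 1) 1 := by
      rw [hv, MvPolynomial.monomial_eq, Finsupp.prod_fintype _ _ (by simp)]
      simp
    have hI' : I = Ideal.span ((fun s => MvPolynomial.monomial s (1 : K)) ''
        Set.range fun i : Fin n => Finsupp.single i (a i)) := by
      rw [hI, ← Set.range_comp]
      simp [Function.comp_def, MvPolynomial.X_pow_eq_monomial]
    rw [hI', hv', MvPolynomial.mem_ideal_span_monomial_image] at h
    obtain ⟨_, ⟨j, rfl⟩, hj⟩ := h _ (by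
      rw [MvPolynomial.support_monomial, if_neg one_ne_zero]; exact Finset.mem_singleton_self _)
    have := hj j
    have h1 := ha1 j
    simp at this
    omega
  have hB : v ∉ I * m ^ k := fun h => hvI ((Ideal.mul_le_left : I * m ^ k ≤ I) h)
  refine ⟨hA, hB, fun h => hB ?_⟩
  rw [← h, Submodule.mem_colon]
  intro f hf
  rw [smul_eq_mul]
  exact hA f hf
end

section
/- Let (R, 𝔪) be a commutative Noetherian local ring. Suppose there exists x₀ ∈ 𝔪 such that for every integer i ≥ 0 and every f ∈ 𝔪^i, if x₀·f ∈ 𝔪^{i+2} then f ∈ 𝔪^{i+1} (equivalently, the initial form of x₀ is a degree-one nonzerodivisor on the associated graded ring gr_𝔪(R) = ⊕_{k≥0} 𝔪^k/𝔪^{k+1}). Then for every ideal I ⊆ R and every integer k ≥ 0, one has (I𝔪^{k+1} : 𝔪) ⊆ 𝔪^{k}. -/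
/-- Let `(R, 𝔪)` be a Noetherian local ring. If some `x₀ ∈ 𝔪` has the property that
for all `i ≥ 0` and `f ∈ 𝔪^i`, `x₀·f ∈ 𝔪^{i+2}` implies `f ∈ 𝔪^{i+1}` (i.e. the
initial form of `x₀` is a degree-one nonzerodivisor on `gr_𝔪(R)`), then for every
ideal `I ⊆ R` and every `k ≥ 0` one has `(I𝔪^{k+1} : 𝔪) ⊆ 𝔪^k`. -/
theorem stmt_9 (R : Type*) [CommRing R] [IsNoetherianRing R] [IsLocalRing R]
    (x₀ : R) (hx₀ : x₀ ∈ IsLocalRing.maximalIdeal R)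
    (hreg : ∀ i : ℕ, ∀ f ∈ (IsLocalRing.maximalIdeal R) ^ i,
      x₀ * f ∈ (IsLocalRing.maximalIdeal R) ^ (i + 2) →
        f ∈ (IsLocalRing.maximalIdeal R) ^ (i + 1))
    (I : Ideal R) (k : ℕ) :
    (I * (IsLocalRing.maximalIdeal R) ^ (k + 1)).colon (IsLocalRing.maximalIdeal R) ≤
      (IsLocalRing.maximalIdeal R) ^ k := by
  intro f hf
  have h1 : x₀ * f ∈ (IsLocalRing.maximalIdeal R) ^ (k + 1) := by
    have h := Submodule.mem_colon.1 hf x₀ hx₀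
    rw [smul_eq_mul, mul_comm f x₀] at h
    exact Ideal.mul_le_right h
  have h2 : ∀ j : ℕ, j ≤ k → f ∈ (IsLocalRing.maximalIdeal R) ^ j := by
    intro j
    induction j with
    | zero => intro _; simp
    | succ j ih =>
      intro hj
      exact hreg j f (ih (by omega)) (Ideal.pow_le_pow_right (by omega) h1)
  exact h2 k le_rfl
end
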